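/- arXiv:2003.11814 — 3 statements merged into one kernel-verified Lean document; each statement's English description precedes it below -/
import Mathlib

section
/- Let f : ℕ → ℝ be strictly monotone increasing and let n be a natural number. Let x̄ and x̲ be real numbers with 0 < x̲ < x̄. Suppose that for every natural number k with k ≤ n we have f(n)·x̄ + f(n)·x̲ ≤ f(n−k)·x̄ + f(n+k)·x̲. Then f is strictly midpoint convex at n at every scale up to n: for every natural number k with 1 ≤ k ≤ n, 2·f(n) < f(n−k) + f(n+k). -/
theorem stmt_1 (f : ℕ → ℝ) (hf : StrictMono f) (n : ℕ) (xbar xlow : ℝ)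
    (hx0 : 0 < xlow) (hxx : xlow < xbar)
    (hcp : ∀ k : ℕ, k ≤ n →
      f n * xbar + f n * xlow ≤ f (n - k) * xbar + f (n + k) * xlow) :
    ∀ k : ℕ, 1 ≤ k → k ≤ n →
      2 * f n < f (n - k) + f (n + k) := by
  intro k hk1 hkn
  have h := hcp k hkn
  have hA : f (n - k) < f n := hf (by omega)
  have h1 : 0 < (f n - f (n - k)) * (xbar - xlow) :=
    mul_pos (sub_pos.mpr hA) (sub_pos.mpr hxx)
  have h2 : (2 * f n) * xlow < (f (n - k) + f (n + k)) * xlow := by nlinarith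
  exact lt_of_mul_lt_mul_right h2 hx0.le
end

section
/- Let f : ℕ → ℝ be given by f(n) = 2^n − 1, let n be a natural number with n ≥ 1, and let x̄, x̲ be real numbers with 0 < x̲ and 0 < x̄. Then the full family of two-worker collusion-proof constraints, namely f(n)·x̄ + f(n)·x̲ ≤ f(n−k)·x̄ + f(n+k)·x̲ for every natural number k with k ≤ n, holds if and only if x̄ ≤ 2·x̲. -/
theorem stmt_4 (f : ℕ → ℝ) (hf : ∀ n : ℕ, f n = 2 ^ n - 1)
    (n : ℕ) (hn : 1 ≤ n) (xbar xlow : ℝ) (hxl : 0 < xlow) (hxb : 0 < xbar) :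
    (∀ k : ℕ, k ≤ n →
      f n * xbar + f n * xlow ≤ f (n - k) * xbar + f (n + k) * xlow) ↔
    xbar ≤ 2 * xlow := by
  have key : ∀ k : ℕ, k ≤ n →
      f (n - k) * xbar + f (n + k) * xlow - (f n * xbar + f n * xlow)
        = 2 ^ (n - k) * ((2 ^ k - 1) * (2 ^ k * xlow - xbar)) := by
    intro k hk
    obtain ⟨m, rfl⟩ := Nat.exists_eq_add_of_le' hk
    simp only [hf, Nat.add_sub_cancel]
    ring
  constructor
  · intro h
    have h1 := key 1 hn
    have h2 := h 1 hn
    have h3 : (0:ℝ) ≤ 2 ^ (n - 1) * ((2 ^ 1 - 1) * (2 ^ 1 * xlow - xbar)) := by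
      rw [← h1]; linarith
    have h4 := nonneg_of_mul_nonneg_right h3 (by positivity)
    linarith
  · intro h k hk
    have h1 := key k hk
    have h3 : (0:ℝ) ≤ 2 ^ (n - k) * ((2 ^ k - 1) * (2 ^ k * xlow - xbar)) := by
      refine mul_nonneg (by positivity) ?_
      rcases Nat.eq_zero_or_pos k with rfl | hk0
      · simp
      · have h5 : (2:ℝ) ^ 1 ≤ 2 ^ k := pow_le_pow_right₀ (by norm_num) hk0
        exact mul_nonneg (by linarith) (by nlinarith)
    linarith
end

section
/- Let f : ℕ → ℝ be strictly monotone increasing and let n be a natural number. Let x̄ and x̲ be real numbers with 0 < x̲ < x̄. Suppose the three-worker collusion-proof constraint for the case of two high-quality workers and one low-quality worker holds: for all natural numbers k₁, k₂ with k₁ ≤ n and k₂ ≤ n, 2·f(n)·x̄ + f(n)·x̲ ≤ f(n−k₁)·x̄ + f(n−k₂)·x̄ + f(n+k₁+k₂)·x̲. Then for every natural number k with 1 ≤ k ≤ n, (f(n) − f(n−k))·x̄ ≤ (f(n+k) − f(n))·x̲, and consequently 2·f(n) < f(n−k) + f(n+k). -/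
theorem stmt_6 (f : ℕ → ℝ) (hf : StrictMono f) (n : ℕ) (xbar xlow : ℝ)
    (hx0 : 0 < xlow) (hxx : xlow < xbar)
    (hcp : ∀ k₁ k₂ : ℕ, k₁ ≤ n → k₂ ≤ n →
      2 * f n * xbar + f n * xlow ≤
        f (n - k₁) * xbar + f (n - k₂) * xbar + f (n + k₁ + k₂) * xlow) :
    ∀ k : ℕ, 1 ≤ k → k ≤ n →
      (f n - f (n - k)) * xbar ≤ (f (n + k) - f n) * xlow ∧
      2 * f n < f (n - k) + f (n + k) := by
  intro k hk hkn
  have h := hcp k 0 hkn (Nat.zero_le n)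
  simp only [Nat.sub_zero, Nat.add_zero] at h
  have h1 : (f n - f (n - k)) * xbar ≤ (f (n + k) - f n) * xlow := by linarith
  refine ⟨h1, ?_⟩
  have h2 : f (n - k) < f n := hf (by omega)
  have h3 : (f n - f (n - k)) * xlow < (f n - f (n - k)) * xbar :=
    mul_lt_mul_of_pos_left hxx (by linarith)
  have h4 : f n - f (n - k) < f (n + k) - f n :=
    lt_of_mul_lt_mul_right (lt_of_lt_of_le h3 h1) hx0.le
  linarith
end
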